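/- The antiprism on n = 2k ≥ 6 vertices has no cycle double cover of size at least n+3; that is, every CDC of the antiprism on n vertices has size at most n+2. -/

import Mathlib

/-!
For a cycle `C` of the antiprism let `a` be its number of edges `{v, v + 1}` and `b` its number of
edges `{v, v + 2}`. The point is the inequality `2k ≤ (k - 1) a + 2b`, in which the faces of the
antiprism (the triangles, with `a = 2` and `b = 1`, and the two `k`-cycles, with `a = 0` and
`b = k`) are tight. Summing it over a cycle double cover, where `a` and `b` both add up to `4k`,
gives `2k |S| ≤ 4k (k + 1)`.

The inequality holds because `a` is even, its edges being the cut between even and odd residues: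
if `a = 0` then `C` runs through a whole coset of the even residues, so `b ≥ k`; if `a = 2` then
`b ≥ 1`, as otherwise `C` runs through all `2k` residues and `a ≥ 2k`; and if `a ≥ 4` there is
nothing to check.
-/

open SimpleGraph

attribute [local instance] Classical.propDecidable

/-- A cycle in a graph: a connected, 2-regular subgraph. -/
def IsCycleSubgraph {V : Type*} {G : SimpleGraph V} (C : G.Subgraph) : Prop :=
  C.coe.Connected ∧ ∀ v ∈ C.verts, (C.neighborSet v).ncard = 2

/-- A cycle double cover: a multiset of cycles covering every edge exactly twice
(counted with multiplicity). -/
def IsCDC {V : Type*} (G : SimpleGraph V) (S : Multiset G.Subgraph) : Prop :=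
  (∀ C ∈ S, IsCycleSubgraph C) ∧
  ∀ e ∈ G.edgeSet, S.countP (fun C => e ∈ C.edgeSet) = 2

/-- Graph minor relation (via branch sets). -/
def HasGraphMinor {V : Type*} {W : Type*} (G : SimpleGraph V) (H : SimpleGraph W) : Prop :=
  ∃ f : W → Set V,
    (∀ w, (f w).Nonempty) ∧
    (∀ w, (G.induce (f w)).Connected) ∧
    (Pairwise fun w₁ w₂ => Disjoint (f w₁) (f w₂)) ∧
    ∀ ⦃w₁ w₂⦄, H.Adj w₁ w₂ → ∃ v₁ ∈ f w₁, ∃ v₂ ∈ f w₂, G.Adj v₁ v₂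

/-- Planarity, via Wagner's theorem: no `K₅` minor and no `K_{3,3}` minor. -/
def IsPlanar {V : Type*} (G : SimpleGraph V) : Prop :=
  ¬ HasGraphMinor G (completeGraph (Fin 5)) ∧
  ¬ HasGraphMinor G (completeBipartiteGraph (Fin 3) (Fin 3))

/-- `k`-connectivity: more than `k` vertices, and removing fewer than `k`
vertices leaves a connected graph. -/
def IsKConnected {V : Type*} [Fintype V] (k : ℕ) (G : SimpleGraph V) : Prop :=
  k < Fintype.card V ∧ ∀ s : Set V, s.ncard < k → (G.induce sᶜ).Connected

/-- A Hamiltonian cycle: a cycle through all vertices. -/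
def IsHamCycle {V : Type*} (G : SimpleGraph V) (C : G.Subgraph) : Prop :=
  IsCycleSubgraph C ∧ C.verts = Set.univ

/-- The antiprism on `2k` vertices: the square of the cycle `C_{2k}`. -/
def antiprism (k : ℕ) : SimpleGraph (ZMod (2 * k)) :=
  SimpleGraph.fromRel fun v w => w = v + 1 ∨ w = v + 2

lemma sum_map_boole {α : Type*} (s : Multiset α) (p : α → Prop) :
    (s.map fun a => if p a then 1 else 0).sum = s.countP p := by
  induction s using Multiset.induction_on with
  | empty => rfl
  | cons a s ih => rw [Multiset.map_cons, Multiset.sum_cons, ih, Multiset.countP_cons, add_comm]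

section Graph

variable {V : Type*}

lemma odd_card_filter_mem_sym2 (s : Finset V) {v w : V} (hvw : v ≠ w) :
    Odd (s.filter (· ∈ s(v, w))).card ↔ Xor (v ∈ s) (w ∈ s) := by
  have hpair : s.filter (· ∈ s(v, w)) = ({v, w} : Finset V).filter (· ∈ s) := by
    ext u
    simp [and_comm]
  rw [hpair, Finset.card_filter, Finset.sum_pair hvw]
  by_cases hv : v ∈ s <;> by_cases hw : w ∈ s <;> simp [hv, hw, Xor]

/-- An edge lies in the cut iff exactly one of its ends is in `s`, so modulo 2 the degree sum over
`s` counts the edges of the cut. -/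
lemma even_ncard_edgeSet_between_compl [Finite V] (H : SimpleGraph V) (s : Set V)
    (hH : ∀ v ∈ s, Even (H.neighborSet v).ncard) : Even (H.between s sᶜ).edgeSet.ncard := by
  cases nonempty_fintype V
  have hcut : (H.between s sᶜ).edgeSet =
      ({e ∈ H.edgeFinset | Odd (s.toFinset.filter (· ∈ e)).card} : Finset (Sym2 V)) := by
    ext e
    induction e with | h v w =>
    simp only [mem_edgeSet, between_adj, Finset.coe_filter, Set.mem_ofPred_eq, mem_edgeFinset]
    refine and_congr_right fun hadj => ?_
    rw [odd_card_filter_mem_sym2 _ hadj.ne, Set.mem_toFinset, Set.mem_toFinset, Xor,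
      and_comm (a := v ∈ sᶜ)]
    rfl
  have hdeg : ∀ v ∈ s.toFinset, Even (H.edgeFinset.filter (v ∈ ·)).card := fun v hv => by
    rw [← incidenceFinset_eq_filter, card_incidenceFinset_eq_degree,
      ← card_neighborFinset_eq_degree, neighborFinset, ← Set.ncard_eq_toFinset_card']
    exact hH v (Set.mem_toFinset.1 hv)
  rw [hcut, Set.ncard_coe_finset, ← Finset.even_sum_iff_even_card_odd]
  have hcount :
      ∑ v ∈ s.toFinset, (H.edgeFinset.filter (v ∈ ·)).card =
        ∑ e ∈ H.edgeFinset, (s.toFinset.filter (· ∈ e)).card :=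
    Finset.sum_card_bipartiteAbove_eq_sum_card_bipartiteBelow fun v e => v ∈ e
  exact hcount ▸ Finset.even_sum _ hdeg

variable {G : SimpleGraph V}

lemma IsCycleSubgraph.even_ncard_neighborSet {C : G.Subgraph} (hC : IsCycleSubgraph C) (v : V) :
    Even (C.neighborSet v).ncard := by
  by_cases hv : v ∈ C.verts
  · exact hC.2 v hv ▸ even_two
  · have hempty : C.neighborSet v = ∅ :=
      Set.eq_empty_of_forall_notMem fun w hw => hv (C.edge_vert hw)
    simp [hempty]

lemma IsCDC.sum_ncard_edgeSet_inter {S : Multiset G.Subgraph} (hS : IsCDC G S) {F : Set (Sym2 V)}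
    (hFG : F ⊆ G.edgeSet) (hF : F.Finite) :
    (S.map fun C => (C.edgeSet ∩ F).ncard).sum = 2 * F.ncard := by
  lift F to Finset (Sym2 V) using hF
  have hcount (C : G.Subgraph) :
      (C.edgeSet ∩ F).ncard = ∑ e ∈ F, if e ∈ C.edgeSet then 1 else 0 := by
    rw [← Finset.card_filter, ← Set.ncard_coe_finset, Finset.coe_filter, Set.inter_comm]
    rfl
  have hcover (e) (he : e ∈ F) : (S.map fun C => if e ∈ C.edgeSet then 1 else 0).sum = 2 := by
    rw [sum_map_boole, hS.2 e (hFG he)]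
  simp only [hcount]
  rw [Multiset.sum_map_sum, Finset.sum_congr rfl hcover, Finset.sum_const, smul_eq_mul, mul_comm,
    Set.ncard_coe_finset]

end Graph

section Step

variable {A : Type*} [AddGroup A]

/-- The edges of the Cayley graph of `A` with respect to the single generator `d`. For `A = ZMod n`
these are the chords of the cycle `C_n` joining vertices at distance `d`. Being a set of unordered
pairs, it consists of the diagonal pairs `s(v, v)` when `d = 0`. -/
def stepEdges (d : A) : Set (Sym2 A) :=
  Set.range fun v => s(v, v + d)

lemma mk_mem_stepEdges {d v w : A} : s(v, w) ∈ stepEdges d ↔ w = v + d ∨ v = w + d := by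
  simp only [stepEdges, Set.mem_range, Sym2.eq_iff]
  grind

lemma stepEdge_injective {d : A} (hd : d + d ≠ 0) :
    Function.Injective fun v : A => s(v, v + d) := fun v w h => by
  rcases Sym2.eq_iff.1 h with ⟨hvw, -⟩ | ⟨hv, hw⟩
  · exact hvw
  · exact absurd (by simpa [hv, add_assoc] using hw) hd

lemma ncard_stepEdges {d : A} (hd : d + d ≠ 0) : (stepEdges d).ncard = Nat.card A :=
  Set.ncard_range_of_injective (stepEdge_injective hd)

variable {G : SimpleGraph A} {C : G.Subgraph} {c d : A}

lemma IsCycleSubgraph.adj_add_of_edgeSet_subset_stepEdges (hC : IsCycleSubgraph C)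
    (hCd : C.edgeSet ⊆ stepEdges d) {v : A} (hv : v ∈ C.verts) : C.Adj v (v + d) := by
  have hsub : C.neighborSet v ⊆ {v + d, v - d} := fun w hw =>
    (mk_mem_stepEdges.1 (hCd (C.mem_edgeSet.2 hw))).imp_right fun h => eq_sub_of_add_eq h.symm
  have hcard : ({v + d, v - d} : Set A).ncard ≤ (C.neighborSet v).ncard := by
    simpa [hC.2 v hv] using Set.ncard_insert_le (v + d) {v - d}
  have hmem : v + d ∈ C.neighborSet v :=
    Set.eq_of_subset_of_ncard_le hsub hcard ▸ Set.mem_insert _ _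
  exact hmem

lemma IsCycleSubgraph.addOrderOf_le_ncard_edgeSet [Finite A] (hC : IsCycleSubgraph C)
    (hd : d + d ≠ 0) (hCd : C.edgeSet ⊆ stepEdges d) : addOrderOf d ≤ C.edgeSet.ncard := by
  have hstep {v} (hv : v ∈ C.verts) := hC.adj_add_of_edgeSet_subset_stepEdges hCd hv
  obtain ⟨v₀, hv₀⟩ := hC.1.nonempty
  have horbit (i : ℕ) : v₀ + i • d ∈ C.verts := by
    induction i with
    | zero => simpa using hv₀
    | succ i ih => simpa [succ_nsmul, add_assoc] using C.edge_vert (hstep ih).symm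
  refine Set.le_ncard_of_inj_on_range (fun i => s(v₀ + i • d, v₀ + i • d + d))
    (fun i _ => hstep (horbit i)) fun i hi j hj hij => ?_
  exact nsmul_injOn_Iio_addOrderOf hi hj (add_left_cancel (stepEdge_injective hd hij))

lemma IsCycleSubgraph.addOrderOf_le_ncard_edgeSet_inter [Finite A] (hC : IsCycleSubgraph C)
    (hd : d + d ≠ 0) (hCcd : C.edgeSet ⊆ stepEdges c ∪ stepEdges d)
    (hc : (C.edgeSet ∩ stepEdges c).ncard = 0) :
    addOrderOf d ≤ (C.edgeSet ∩ stepEdges d).ncard := by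
  have hdisj : Disjoint C.edgeSet (stepEdges c) :=
    Set.disjoint_iff_inter_eq_empty.2 ((Set.ncard_eq_zero).1 hc)
  have hCd : C.edgeSet ⊆ stepEdges d := hdisj.subset_right_of_subset_union hCcd
  rw [Set.inter_eq_left.2 hCd]
  exact hC.addOrderOf_le_ncard_edgeSet hd hCd

/-- The edges of `C` in `stepEdges c` are those of the cut between the two fibres of `φ`. -/
lemma IsCycleSubgraph.even_ncard_edgeSet_inter [Finite A] (hC : IsCycleSubgraph C)
    (φ : A →+ ZMod 2) (hφc : φ c = 1) (hφd : φ d = 0)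
    (hCcd : C.edgeSet ⊆ stepEdges c ∪ stepEdges d) : Even (C.edgeSet ∩ stepEdges c).ncard := by
  have hcut : (C.spanningCoe.between {v | φ v = 0} {v | φ v = 0}ᶜ).edgeSet =
      C.edgeSet ∩ stepEdges c := by
    ext e
    induction e with | h v w =>
    simp only [mem_edgeSet, between_adj, Set.mem_inter_iff, Subgraph.mem_edgeSet,
      Subgraph.spanningCoe_adj, Set.mem_compl_iff, Set.mem_ofPred_eq]
    refine and_congr_right fun hadj => ?_
    have hne : s(v, w) ∈ stepEdges c → φ v ≠ φ w := fun h => by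
      rcases mk_mem_stepEdges.1 h with rfl | rfl <;> simp [hφc]
    have heq : s(v, w) ∈ stepEdges d → φ v = φ w := fun h => by
      rcases mk_mem_stepEdges.1 h with rfl | rfl <;> simp [hφd]
    have hfibre : ∀ x y : ZMod 2, (x = 0 ∧ ¬y = 0 ∨ ¬x = 0 ∧ y = 0) ↔ x ≠ y := by decide
    rw [hfibre]
    exact ⟨fun h => (hCcd hadj).resolve_right (mt heq h), hne⟩
  exact hcut ▸ even_ncard_edgeSet_between_compl _ _ fun v _ => hC.even_ncard_neighborSet v

end Step

section Antiprism

variable {k : ℕ}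

lemma natCast_zmod_ne_zero_of_lt {m n : ℕ} (hm : 0 < m) (hmn : m < n) : (m : ZMod n) ≠ 0 :=
  mt (ZMod.natCast_eq_zero_iff m n).1 (Nat.not_dvd_of_pos_of_lt hm hmn)

lemma one_add_one_zmod_ne_zero (hk : 2 ≤ k) : (1 : ZMod (2 * k)) + 1 ≠ 0 := by
  exact_mod_cast natCast_zmod_ne_zero_of_lt (m := 1 + 1) (by omega) (by omega)

lemma two_add_two_zmod_ne_zero (hk : 3 ≤ k) : (2 : ZMod (2 * k)) + 2 ≠ 0 := by
  exact_mod_cast natCast_zmod_ne_zero_of_lt (m := 2 + 2) (by omega) (by omega)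

lemma edgeSet_antiprism (hk : 2 ≤ k) :
    (antiprism k).edgeSet = stepEdges 1 ∪ stepEdges 2 := by
  have h2 := one_add_one_zmod_ne_zero hk
  ext e
  induction e with | h v w =>
  simp only [antiprism, mem_edgeSet, fromRel_adj, Set.mem_union, mk_mem_stepEdges]
  grind

lemma addOrderOf_two_zmod (hk : k ≠ 0) : addOrderOf (2 : ZMod (2 * k)) = k := by
  have h := ZMod.addOrderOf_coe 2 (mul_ne_zero two_ne_zero hk)
  simpa using h

lemma IsCycleSubgraph.even_ncard_edgeSet_inter_stepEdges_one (hk : 2 ≤ k)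
    {C : (antiprism k).Subgraph} (hC : IsCycleSubgraph C) :
    Even (C.edgeSet ∩ stepEdges 1).ncard := by
  have : NeZero (2 * k) := ⟨by omega⟩
  let parity : ZMod (2 * k) →+* ZMod 2 := ZMod.castHom (dvd_mul_right 2 k) (ZMod 2)
  exact hC.even_ncard_edgeSet_inter (parity : ZMod (2 * k) →+ ZMod 2) (map_one parity)
    (map_ofNat parity 2) (edgeSet_antiprism hk ▸ C.edgeSet_subset)

/-- The inequality `2k ≤ (k - 1) a + 2b`, with `a` moved to the left to avoid subtraction. -/
lemma IsCycleSubgraph.two_mul_add_ncard_le (hk : 3 ≤ k) {C : (antiprism k).Subgraph}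
    (hC : IsCycleSubgraph C) :
    2 * k + (C.edgeSet ∩ stepEdges 1).ncard ≤
      k * (C.edgeSet ∩ stepEdges 1).ncard + 2 * (C.edgeSet ∩ stepEdges 2).ncard := by
  have : NeZero (2 * k) := ⟨by omega⟩
  have hsub : C.edgeSet ⊆ stepEdges 1 ∪ stepEdges 2 :=
    edgeSet_antiprism (by omega : 2 ≤ k) ▸ C.edgeSet_subset
  have hlong := hC.addOrderOf_le_ncard_edgeSet_inter (two_add_two_zmod_ne_zero hk) hsub
  have hshort := hC.addOrderOf_le_ncard_edgeSet_inter (one_add_one_zmod_ne_zero (by omega))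
    (Set.union_comm _ _ ▸ hsub)
  rw [addOrderOf_two_zmod (by omega)] at hlong
  rw [ZMod.addOrderOf_one] at hshort
  obtain ⟨m, hm⟩ := hC.even_ncard_edgeSet_inter_stepEdges_one (by omega)
  rw [hm] at hlong hshort ⊢
  obtain rfl | rfl | hm2 : m = 0 ∨ m = 1 ∨ 2 ≤ m := by omega
  · omega
  · omega
  · nlinarith

end Antiprism

/-- The antiprism on `n = 2k ≥ 6` vertices has no CDC of size at least `n + 3`:
every CDC has size at most `n + 2`. -/
theorem statement_8 (k : ℕ) (hk : 3 ≤ k)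
    (S : Multiset (antiprism k).Subgraph) (hS : IsCDC (antiprism k) S) :
    Multiset.card S ≤ 2 * k + 2 := by
  have : NeZero (2 * k) := ⟨by omega⟩
  have hedges := edgeSet_antiprism (by omega : 2 ≤ k)
  have hshort := hS.sum_ncard_edgeSet_inter (F := stepEdges 1) (hedges ▸ Set.subset_union_left)
    (Set.toFinite _)
  have hlong := hS.sum_ncard_edgeSet_inter (F := stepEdges 2) (hedges ▸ Set.subset_union_right)
    (Set.toFinite _)
  rw [ncard_stepEdges (one_add_one_zmod_ne_zero (by omega)), Nat.card_zmod] at hshort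
  rw [ncard_stepEdges (two_add_two_zmod_ne_zero hk), Nat.card_zmod] at hlong
  have hsum := Multiset.sum_map_le_sum_map _ _ fun C hC => (hS.1 C hC).two_mul_add_ncard_le hk
  simp only [Multiset.sum_map_add, Multiset.sum_map_mul_left, Multiset.map_const',
    Multiset.sum_replicate, hshort, hlong, smul_eq_mul] at hsum
  exact Nat.le_of_mul_le_mul_right (c := 2 * k) (by linarith) (by omega)
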